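/- In the E_q(2) example with entwining data (E_q(2), C, ψ, c_s, ψ^C) where ψ^C(c_p ⊗ c_r) = c_r ⊗ c_{p+r−s}, the linear map Φ : C → E_q(2), Φ(c_p) = v^{p−s}, is convolution invertible with Φ⁻¹(c_p) = v^{−p+s}, satisfies Φ(c_s) = 1, and satisfies ψ∘(id_C ⊗ Φ) = (Φ ⊗ id_C)∘ψ^C. Consequently E_q(2) ≅ X_q ×_Φ C is a cleft extension, with trivial cocycle σ(c_p ⊗ c_r) = 1 and ρ given by ρ(c_p ⊗ v^{±1}) = 1, ρ(c_p ⊗ n) = q^{2p}(q^{−2s}n + μ(v−1)), ρ(c_p ⊗ n̄) = q^{2p}(q^{−2s}n̄ + ν(v⁻¹−1)). -/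

import Mathlib

open TensorProduct LinearMap

noncomputable section

namespace Entwine

variable (k : Type) [Field k] (P : Type) [Ring P] [Algebra k P]
  (C : Type) [AddCommGroup C] [Module k C] [Coalgebra k C]

/-- coproduct of `C` -/
abbrev Δ : C →ₗ[k] C ⊗[k] C := Coalgebra.comul
/-- counit of `C` -/
abbrev ε : C →ₗ[k] k := Coalgebra.counit
/-- multiplication of `P` -/
abbrev μ : P ⊗[k] P →ₗ[k] P := LinearMap.mul' k P

variable (ψ : C ⊗[k] P →ₗ[k] P ⊗[k] C)

/-- entwining axiom `ψ∘(id⊗μ) = (μ⊗id)∘ψ₂₃∘ψ₁₂` -/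
def AxMul : Prop :=
  ψ ∘ₗ map LinearMap.id (μ k P) =
    map (μ k P) LinearMap.id
      ∘ₗ (TensorProduct.assoc k P P C).symm.toLinearMap
      ∘ₗ map LinearMap.id ψ
      ∘ₗ (TensorProduct.assoc k P C P).toLinearMap
      ∘ₗ map ψ LinearMap.id
      ∘ₗ (TensorProduct.assoc k C P P).symm.toLinearMap

/-- entwining axiom `ψ(c ⊗ 1) = 1 ⊗ c` -/
def AxOne : Prop := ∀ c : C, ψ (c ⊗ₜ (1 : P)) = (1 : P) ⊗ₜ c

/-- entwining axiom `(id⊗Δ)∘ψ = ψ₁₂∘ψ₂₃∘(Δ⊗id)` -/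
def AxComul : Prop :=
  map LinearMap.id (Δ k C) ∘ₗ ψ =
    (TensorProduct.assoc k P C C).toLinearMap
      ∘ₗ map ψ LinearMap.id
      ∘ₗ (TensorProduct.assoc k C P C).symm.toLinearMap
      ∘ₗ map LinearMap.id ψ
      ∘ₗ (TensorProduct.assoc k C C P).toLinearMap
      ∘ₗ map (Δ k C) LinearMap.id

/-- entwining axiom `(id⊗ε)∘ψ = ε⊗id` -/
def AxCounit : Prop :=
  (TensorProduct.rid k P).toLinearMap ∘ₗ map LinearMap.id (ε k C) ∘ₗ ψ =
    (TensorProduct.lid k P).toLinearMap ∘ₗ map (ε k C) LinearMap.id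

/-- `ψ` is an entwining map for the algebra `P` and the coalgebra `C` -/
def IsEntwining : Prop :=
  AxMul k P C ψ ∧ AxOne k P C ψ ∧ AxComul k P C ψ ∧ AxCounit k P C ψ

variable (e : C)

/-- `e` is a group-like element -/
def IsGrouplike : Prop :=
  Δ k C e = e ⊗ₜ[k] e ∧ ε k C e = 1

variable (ψC : C ⊗[k] C →ₗ[k] C ⊗[k] C)

/-- `(id⊗Δ)∘ψ^C = ψ^C₁₂∘ψ^C₂₃∘(Δ⊗id)` -/
def AxPsiCComul : Prop :=
  map LinearMap.id (Δ k C) ∘ₗ ψC =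
    (TensorProduct.assoc k C C C).toLinearMap
      ∘ₗ map ψC LinearMap.id
      ∘ₗ (TensorProduct.assoc k C C C).symm.toLinearMap
      ∘ₗ map LinearMap.id ψC
      ∘ₗ (TensorProduct.assoc k C C C).toLinearMap
      ∘ₗ map (Δ k C) LinearMap.id

/-- `(id⊗ε)∘ψ^C = ε⊗id` -/
def AxPsiCCounit : Prop :=
  (TensorProduct.rid k C).toLinearMap ∘ₗ map LinearMap.id (ε k C) ∘ₗ ψC =
    (TensorProduct.lid k C).toLinearMap ∘ₗ map (ε k C) LinearMap.id

/-- `ψ^C(e ⊗ c) = Δc` -/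
def AxPsiCUnit : Prop := ∀ c : C, ψC (e ⊗ₜ[k] c) = Δ k C c

/-- `(P, C, ψ, e, ψ^C)` form entwining data -/
def IsEntwiningData : Prop :=
  IsEntwining k P C ψ ∧ IsGrouplike k C e ∧
    AxPsiCComul k C ψC ∧ AxPsiCCounit k C ψC ∧ AxPsiCUnit k C e ψC

/-- the right coaction `Δ_R u = ψ(e ⊗ u)` on `P` -/
def deltaR : P →ₗ[k] P ⊗[k] C := ψ ∘ₗ TensorProduct.mk k C P e

/-- the fixed point subspace `M = P^{coC}_e`, as a submodule of `P` -/
def Msub : Submodule k P where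
  carrier := {x : P | ψ (e ⊗ₜ x) = x ⊗ₜ e}
  add_mem' := by
    intro a b ha hb
    simp only [Set.mem_setOf_eq] at *
    rw [TensorProduct.tmul_add, map_add, ha, hb, TensorProduct.add_tmul]
  zero_mem' := by
    simp only [Set.mem_setOf_eq, TensorProduct.tmul_zero, map_zero,
      TensorProduct.zero_tmul]
  smul_mem' := by
    intro r x hx
    simp only [Set.mem_setOf_eq] at *
    rw [TensorProduct.tmul_smul, map_smul, hx, TensorProduct.smul_tmul']

/-- the subspace `M ⊗ C` of `P ⊗ C` -/
def MCsub : Submodule k (P ⊗[k] C) :=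
  LinearMap.range (map (Msub k P C ψ e).subtype (LinearMap.id : C →ₗ[k] C))

variable (ρ : C ⊗[k] P →ₗ[k] P) (σ : C ⊗[k] C →ₗ[k] P)

/-- the map `ρ̂ : c ⊗ x ↦ ρ(c₍₁₎ ⊗ x_α) ⊗ c₍₂₎^α` -/
def rhat : C ⊗[k] P →ₗ[k] P ⊗[k] C :=
  map ρ LinearMap.id
    ∘ₗ (TensorProduct.assoc k C P C).symm.toLinearMap
    ∘ₗ map LinearMap.id ψ
    ∘ₗ (TensorProduct.assoc k C C P).toLinearMap
    ∘ₗ map (Δ k C) LinearMap.id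

/-- the map `σ̂ : b ⊗ c ↦ σ(b₍₁₎ ⊗ c_A) ⊗ b₍₂₎^A` -/
def shat : C ⊗[k] C →ₗ[k] P ⊗[k] C :=
  map σ LinearMap.id
    ∘ₗ (TensorProduct.assoc k C C C).symm.toLinearMap
    ∘ₗ map LinearMap.id ψC
    ∘ₗ (TensorProduct.assoc k C C C).toLinearMap
    ∘ₗ map (Δ k C) LinearMap.id

/-- multiplication of the first two factors: `x ⊗ (y ⊗ c) ↦ xy ⊗ c` -/
def mulPC : P ⊗[k] (P ⊗[k] C) →ₗ[k] P ⊗[k] C :=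
  map (μ k P) LinearMap.id ∘ₗ (TensorProduct.assoc k P P C).symm.toLinearMap

/-- the crossed product `(x ⊗ b)(y ⊗ c) = xρ(b₍₁₎⊗y_α)σ(b₍₂₎^α₍₁₎⊗c_A) ⊗ b₍₂₎^α₍₂₎^A` -/
def prodX : (P ⊗[k] C) ⊗[k] (P ⊗[k] C) →ₗ[k] P ⊗[k] C :=
  mulPC k P C
    ∘ₗ map LinearMap.id (mulPC k P C)
    ∘ₗ map LinearMap.id
        (map LinearMap.id (shat k P C ψC σ)
          ∘ₗ (TensorProduct.assoc k P C C).toLinearMap)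
    ∘ₗ map LinearMap.id
        (map (rhat k P C ψ ρ) LinearMap.id
          ∘ₗ (TensorProduct.assoc k C P C).symm.toLinearMap)
    ∘ₗ (TensorProduct.assoc k P C (P ⊗[k] C)).toLinearMap

/-- condition (i): `ρ(e,x) = x` for `x ∈ M` and `ρ(c,1) = ε(c)1` -/
def CondI : Prop :=
  (∀ x : P, x ∈ Msub k P C ψ e → ρ (e ⊗ₜ x) = x) ∧
    ∀ c : C, ρ (c ⊗ₜ (1 : P)) = ε k C c • (1 : P)

/-- condition (ii): `ρ̂` maps `C ⊗ M` into `M ⊗ C` -/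
def CondII : Prop :=
  ∀ (c : C) (x : P), x ∈ Msub k P C ψ e →
    rhat k P C ψ ρ (c ⊗ₜ x) ∈ MCsub k P C ψ e

/-- the right hand side of condition (iii): `(μ⊗id)∘(id⊗ρ̂)∘(ρ̂⊗id)` -/
def BmapIII : C ⊗[k] (P ⊗[k] P) →ₗ[k] P ⊗[k] C :=
  mulPC k P C
    ∘ₗ map LinearMap.id (rhat k P C ψ ρ)
    ∘ₗ (TensorProduct.assoc k P C P).toLinearMap
    ∘ₗ map (rhat k P C ψ ρ) LinearMap.id
    ∘ₗ (TensorProduct.assoc k C P P).symm.toLinearMap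

/-- condition (iii): twisted multiplicativity of `ρ` -/
def CondIII : Prop :=
  ∀ (c : C) (x y : P), x ∈ Msub k P C ψ e → y ∈ Msub k P C ψ e →
    rhat k P C ψ ρ (c ⊗ₜ (x * y)) = BmapIII k P C ψ ρ (c ⊗ₜ (x ⊗ₜ y))

/-- `σ` takes values in `M` -/
def SigmaIntoM : Prop := ∀ b c : C, σ (b ⊗ₜ c) ∈ Msub k P C ψ e

/-- condition (iv): `σ(e⊗c) = ε(c)1` and `σ(c₍₁₎⊗e_A) ⊗ c₍₂₎^A = 1 ⊗ c` -/
def CondIV : Prop :=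
  (∀ c : C, σ (e ⊗ₜ c) = ε k C c • (1 : P)) ∧
    ∀ c : C, shat k P C ψC σ (c ⊗ₜ e) = (1 : P) ⊗ₜ c

/-- `(ρ, σ)` are crossed product data: conditions (i)–(iv). -/
def IsCrossedData : Prop :=
  CondI k P C ψ e ρ ∧ CondII k P C ψ e ρ ∧ CondIII k P C ψ e ρ ∧
    SigmaIntoM k P C ψ e σ ∧ CondIV k P C e ψC σ

/-- left hand side of the cocycle condition (2.6) -/
def CocLHS : C ⊗[k] (C ⊗[k] C) →ₗ[k] P ⊗[k] C :=
  mulPC k P C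
    ∘ₗ map LinearMap.id (shat k P C ψC σ)
    ∘ₗ (TensorProduct.assoc k P C C).toLinearMap
    ∘ₗ map (rhat k P C ψ ρ) LinearMap.id
    ∘ₗ (TensorProduct.assoc k C P C).symm.toLinearMap
    ∘ₗ map LinearMap.id (shat k P C ψC σ)

/-- right hand side of the cocycle condition (2.6) -/
def CocRHS : C ⊗[k] (C ⊗[k] C) →ₗ[k] P ⊗[k] C :=
  mulPC k P C
    ∘ₗ map LinearMap.id (shat k P C ψC σ)
    ∘ₗ (TensorProduct.assoc k P C C).toLinearMap
    ∘ₗ map (shat k P C ψC σ) LinearMap.id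
    ∘ₗ (TensorProduct.assoc k C C C).symm.toLinearMap

/-- the cocycle condition (2.6) -/
def Cocycle : Prop := CocLHS k P C ψ ψC ρ σ = CocRHS k P C ψC σ

/-- left hand side of the twisted module condition (2.7) -/
def TwLHS : C ⊗[k] (C ⊗[k] P) →ₗ[k] P ⊗[k] C :=
  mulPC k P C
    ∘ₗ map LinearMap.id (shat k P C ψC σ)
    ∘ₗ (TensorProduct.assoc k P C C).toLinearMap
    ∘ₗ map (rhat k P C ψ ρ) LinearMap.id
    ∘ₗ (TensorProduct.assoc k C P C).symm.toLinearMap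
    ∘ₗ map LinearMap.id (rhat k P C ψ ρ)

/-- right hand side of the twisted module condition (2.7) -/
def TwRHS : C ⊗[k] (C ⊗[k] P) →ₗ[k] P ⊗[k] C :=
  mulPC k P C
    ∘ₗ map LinearMap.id (rhat k P C ψ ρ)
    ∘ₗ (TensorProduct.assoc k P C P).toLinearMap
    ∘ₗ map (shat k P C ψC σ) LinearMap.id
    ∘ₗ (TensorProduct.assoc k C C P).symm.toLinearMap

/-- the twisted module condition (2.7), for `x ∈ M` -/
def Twisted : Prop :=
  ∀ (a b : C) (x : P), x ∈ Msub k P C ψ e →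
    TwLHS k P C ψ ψC ρ σ (a ⊗ₜ (b ⊗ₜ x)) = TwRHS k P C ψ ψC ρ σ (a ⊗ₜ (b ⊗ₜ x))

end Entwine

namespace Entwine

section Cleft
variable (k : Type) [Field k] (P : Type) [Ring P] [Algebra k P]
    (C : Type) [AddCommGroup C] [Module k C] [Coalgebra k C]
    (ψ : C ⊗[k] P →ₗ[k] P ⊗[k] C) (e : C) (ψC : C ⊗[k] C →ₗ[k] C ⊗[k] C)
    (Φ Φi : C →ₗ[k] P)

/-- `Φi` is a convolution inverse of `Φ` in `Hom(C, P)` -/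
def ConvInv : Prop :=
  (μ k P ∘ₗ map Φ Φi ∘ₗ Δ k C = Algebra.linearMap k P ∘ₗ ε k C) ∧
    (μ k P ∘ₗ map Φi Φ ∘ₗ Δ k C = Algebra.linearMap k P ∘ₗ ε k C)

/-- the covariance condition `ψ∘(id⊗Φ) = (Φ⊗id)∘ψ^C` -/
def CovPhi : Prop :=
  ψ ∘ₗ map LinearMap.id Φ = map Φ LinearMap.id ∘ₗ ψC

/-- `ρ(c ⊗ u) = Φ(c₍₁₎) u_α Φ⁻¹(c₍₂₎^α)` -/
def rhoPhi : C ⊗[k] P →ₗ[k] P :=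
  μ k P
    ∘ₗ map LinearMap.id (μ k P)
    ∘ₗ map Φ (map LinearMap.id Φi)
    ∘ₗ map LinearMap.id ψ
    ∘ₗ (TensorProduct.assoc k C C P).toLinearMap
    ∘ₗ map (Δ k C) LinearMap.id

/-- `σ(b ⊗ c) = Φ(b₍₁₎) Φ(c_A) Φ⁻¹(b₍₂₎^A)` -/
def sigmaPhi : C ⊗[k] C →ₗ[k] P :=
  μ k P
    ∘ₗ map LinearMap.id (μ k P)
    ∘ₗ map Φ (map Φ Φi)
    ∘ₗ map LinearMap.id ψC
    ∘ₗ (TensorProduct.assoc k C C C).toLinearMap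
    ∘ₗ map (Δ k C) LinearMap.id

/-- `Θ : x ⊗ c ↦ x Φ(c)` -/
def Theta : P ⊗[k] C →ₗ[k] P := μ k P ∘ₗ map LinearMap.id Φ

/-- `Θ⁻¹ : u ↦ u_α Φ⁻¹(e^α₍₁₎) ⊗ e^α₍₂₎` -/
def ThetaInv : P →ₗ[k] P ⊗[k] C :=
  mulPC k P C
    ∘ₗ map LinearMap.id (map Φi LinearMap.id)
    ∘ₗ map LinearMap.id (Δ k C)
    ∘ₗ deltaR k P C ψ e

end Cleft

end Entwine

namespace Eq2Ex

variable (k : Type) [Field k] (q : kˣ)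

/-- the defining relations of the quantum Euclidean group `E_q(2)`, on the free
algebra with generators `0 ↦ v`, `1 ↦ v⁻¹`, `2 ↦ n`, `3 ↦ n̄`:
`vn = q²nv`, `vn̄ = q²n̄v`, `nn̄ = q²n̄n`, `vv⁻¹ = v⁻¹v = 1`. -/
inductive EqRel : FreeAlgebra k (Fin 4) → FreeAlgebra k (Fin 4) → Prop
  | vn : EqRel (FreeAlgebra.ι k 0 * FreeAlgebra.ι k 2)
      (((q : k) ^ 2) • (FreeAlgebra.ι k 2 * FreeAlgebra.ι k 0))
  | vnb : EqRel (FreeAlgebra.ι k 0 * FreeAlgebra.ι k 3)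
      (((q : k) ^ 2) • (FreeAlgebra.ι k 3 * FreeAlgebra.ι k 0))
  | nnb : EqRel (FreeAlgebra.ι k 2 * FreeAlgebra.ι k 3)
      (((q : k) ^ 2) • (FreeAlgebra.ι k 3 * FreeAlgebra.ι k 2))
  | vvi : EqRel (FreeAlgebra.ι k 0 * FreeAlgebra.ι k 1) 1
  | viv : EqRel (FreeAlgebra.ι k 1 * FreeAlgebra.ι k 0) 1

/-- the quantum Euclidean group `E_q(2)` -/
abbrev Eq2 : Type := RingQuot (EqRel k q)

/-- the generator `v` -/
def vE : Eq2 k q := RingQuot.mkAlgHom k (EqRel k q) (FreeAlgebra.ι k 0)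
/-- the generator `v⁻¹` -/
def viE : Eq2 k q := RingQuot.mkAlgHom k (EqRel k q) (FreeAlgebra.ι k 1)
/-- the generator `n` -/
def nE : Eq2 k q := RingQuot.mkAlgHom k (EqRel k q) (FreeAlgebra.ι k 2)
/-- the generator `n̄` -/
def nbE : Eq2 k q := RingQuot.mkAlgHom k (EqRel k q) (FreeAlgebra.ι k 3)

/-- the coalgebra `C` spanned by the group-like elements `c_p`, `p ∈ ℤ` -/
abbrev Cz : Type := ℤ →₀ k

/-- the group-like basis element `c_p` -/
def cz (p : ℤ) : Cz k := Finsupp.single p (1 : k)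

variable (μv νv : kˣ) (s : ℤ)

/-- `ψ` takes the prescribed values on the generators of `E_q(2)`. -/
def PsiOnGens (ψ : Cz k ⊗[k] Eq2 k q →ₗ[k] Eq2 k q ⊗[k] Cz k) : Prop :=
  (∀ p : ℤ, ψ (cz k p ⊗ₜ vE k q) = vE k q ⊗ₜ cz k (p + 1)) ∧
  (∀ p : ℤ, ψ (cz k p ⊗ₜ viE k q) = viE k q ⊗ₜ cz k (p - 1)) ∧
  (∀ p : ℤ, ψ (cz k p ⊗ₜ nE k q) =
    nE k q ⊗ₜ cz k p
      + ((μv : k) * ((q ^ (2 * p) : kˣ) : k)) • (vE k q ⊗ₜ cz k p)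
      - ((μv : k) * ((q ^ (2 * p) : kˣ) : k)) • (vE k q ⊗ₜ cz k (p + 1))) ∧
  (∀ p : ℤ, ψ (cz k p ⊗ₜ nbE k q) =
    nbE k q ⊗ₜ cz k p
      + ((νv : k) * ((q ^ (2 * p) : kˣ) : k)) • (viE k q ⊗ₜ cz k p)
      - ((νv : k) * ((q ^ (2 * p) : kˣ) : k)) • (viE k q ⊗ₜ cz k (p - 1)))

end Eq2Ex

namespace Eq2Ex

/-- integer powers of `v`: `v^m` for `m ≥ 0` and `(v⁻¹)^{-m}` for `m < 0` -/
def vzE (k : Type) [Field k] (q : kˣ) (m : ℤ) : Eq2 k q :=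
  if 0 ≤ m then vE k q ^ m.toNat else viE k q ^ (-m).toNat

/-- the trivialisation `Φ(c_p) = v^{p-s}` -/
def PhiE (k : Type) [Field k] (q : kˣ) (s : ℤ) : Cz k →ₗ[k] Eq2 k q :=
  Finsupp.lsum k fun p : ℤ => LinearMap.toSpanSingleton k (Eq2 k q) (vzE k q (p - s))

/-- the convolution inverse `Φ⁻¹(c_p) = v^{-p+s}` -/
def PhiiE (k : Type) [Field k] (q : kˣ) (s : ℤ) : Cz k →ₗ[k] Eq2 k q :=
  Finsupp.lsum k fun p : ℤ => LinearMap.toSpanSingleton k (Eq2 k q) (vzE k q (s - p))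

end Eq2Ex

/-!
The convolution algebra `Hom(C, P)` acts on `P ⊗ C` by the left `P`-linear maps
`twist f : x ⊗ c ↦ x f(c₍₁₎) ⊗ c₍₂₎`, so `twist Φ` and `twist Φ⁻¹` are mutually inverse, and
`Θ = (id ⊗ ε) ∘ twist Φ`. Covariance of `Φ` says that `Δ_R ∘ Θ = twist Φ` on `M ⊗ C`; hence
`twist Φ⁻¹ ∘ Δ_R` is inverse to `Θ`, provided that it takes values in `M ⊗ C`. By coassociativity
it equals `(π ⊗ id) ∘ Δ_R` with `π u = u₍₀₎ Φ⁻¹(u₍₁₎)`, and `Δ_R ∘ π` factors as `L ∘ Δ_R` for a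
left `P`-linear map `L`. Since `π ∘ Φ = ε`, we get `L ∘ twist Φ = (id ⊗ ε) ⊗ e`; cancelling
`twist Φ` against `twist Φ⁻¹` then shows that `π` has its values in `M`.

In `E_q(2)` the generator `v` is a unit, `ψ` sends `c_p ⊗ v^m` to `v^m ⊗ c_{p+m}`, and conjugation
by `v^m` multiplies `n` and `n̄` by `q^{2m}`; the values of `σ` and `ρ` follow from these rules.
-/

namespace Entwine

section LeftExtend

variable {k P C N : Type*} [CommRing k] [Ring P] [Algebra k P] [AddCommGroup C] [Module k C]
  [AddCommGroup N] [Module k N] [Module P N] [IsScalarTower k P N]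

/-- The extension `x ⊗ c ↦ x • g c` of a `k`-linear map `g` on `C` to a left `P`-linear map on
`P ⊗ C`. Mathlib's `LinearMap.liftBaseChange` is restricted to commutative `P`. -/
def leftExtend (g : C →ₗ[k] N) : P ⊗[k] C →ₗ[P] N :=
  AlgebraTensorModule.lift (toSpanSingleton P (C →ₗ[k] N) g)

@[simp]
lemma leftExtend_tmul (g : C →ₗ[k] N) (x : P) (c : C) : leftExtend g (x ⊗ₜ[k] c) = x • g c := rfl

end LeftExtend

variable {k : Type} [Field k] {P : Type} [Ring P] [Algebra k P] {C : Type} [AddCommGroup C]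
  [Module k C] {ψ : C ⊗[k] P →ₗ[k] P ⊗[k] C} {e : C}

lemma mulPC_tmul (x : P) (t : P ⊗[k] C) : mulPC k P C (x ⊗ₜ t) = x • t := by
  induction t with
  | zero => simp
  | tmul y c => simp [mulPC, smul_tmul']
  | add t t' ht ht' => rw [tmul_add, map_add, ht, ht', smul_add]

/-- The right multiplication `x ⊗ c ↦ x ψ(c ⊗ b)` by `b`, which makes `P ⊗ C` a `P`-bimodule. -/
def rightMul (ψ : C ⊗[k] P →ₗ[k] P ⊗[k] C) (b : P) : P ⊗[k] C →ₗ[P] P ⊗[k] C :=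
  leftExtend (ψ ∘ₗ (TensorProduct.mk k C P).flip b)

lemma AxMul.apply_tmul_mul (hmul : AxMul k P C ψ) (c : C) (a b : P) :
    ψ (c ⊗ₜ (a * b)) = rightMul ψ b (ψ (c ⊗ₜ a)) := by
  have h := LinearMap.congr_fun hmul (c ⊗ₜ (a ⊗ₜ b))
  simp only [coe_comp, Function.comp_apply, LinearEquiv.coe_coe, map_tmul, id_coe, id_eq,
    mul'_apply, assoc_symm_tmul] at h
  rw [h]
  generalize ψ (c ⊗ₜ a) = t
  induction t with
  | zero => simp
  | tmul x d => exact mulPC_tmul x (ψ (d ⊗ₜ b))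
  | add t t' ht ht' => simp only [add_tmul, map_add, ht, ht']

lemma AxMul.apply_tmul_mul_of_eq_tmul (hmul : AxMul k P C ψ) {c d : C} {a a' : P}
    (ha : ψ (c ⊗ₜ a) = a' ⊗ₜ d) (b : P) : ψ (c ⊗ₜ (a * b)) = a' • ψ (d ⊗ₜ b) := by
  rw [hmul.apply_tmul_mul, ha]
  rfl

lemma AxMul.apply_tmul_units_inv (hmul : AxMul k P C ψ) (hone : AxOne k P C ψ) {c d : C} {u : Pˣ}
    (hu : ψ (c ⊗ₜ (u : P)) = (u : P) ⊗ₜ d) :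
    ψ (d ⊗ₜ (↑u⁻¹ : P)) = (↑u⁻¹ : P) ⊗ₜ c := by
  have h : (u : P) • ψ (d ⊗ₜ (↑u⁻¹ : P)) = 1 ⊗ₜ c := by
    rw [← hmul.apply_tmul_mul_of_eq_tmul hu, u.mul_inv, hone]
  simpa [smul_smul, smul_tmul'] using congrArg ((↑u⁻¹ : P) • ·) h

lemma AxMul.apply_tmul_units_zpow (hmul : AxMul k P C ψ) (hone : AxOne k P C ψ) {c : ℤ → C}
    {u : Pˣ} (hu : ∀ p, ψ (c p ⊗ₜ (u : P)) = (u : P) ⊗ₜ c (p + 1)) (p m : ℤ) :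
    ψ (c p ⊗ₜ (↑(u ^ m) : P)) = (↑(u ^ m) : P) ⊗ₜ c (p + m) := by
  induction m with
  | zero => simp [hone (c p)]
  | succ i ih =>
    rw [zpow_add_one, Units.val_mul, hmul.apply_tmul_mul_of_eq_tmul ih, hu, smul_tmul',
      smul_eq_mul, add_assoc]
  | pred i ih =>
    have hu_inv : ψ (c (p + -i) ⊗ₜ (↑u⁻¹ : P)) = (↑u⁻¹ : P) ⊗ₜ c (p + (-i - 1)) := by
      refine hmul.apply_tmul_units_inv hone ?_
      simpa [add_assoc] using hu (p + (-i - 1))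
    rw [zpow_sub_one, Units.val_mul, hmul.apply_tmul_mul_of_eq_tmul ih, hu_inv, smul_tmul',
      smul_eq_mul]

lemma deltaR_apply (u : P) : deltaR k P C ψ e u = ψ (e ⊗ₜ u) := rfl

lemma mem_Msub {x : P} : x ∈ Msub k P C ψ e ↔ deltaR k P C ψ e x = x ⊗ₜ e := Iff.rfl

lemma deltaR_mul (hmul : AxMul k P C ψ) (a b : P) :
    deltaR k P C ψ e (a * b) = rightMul ψ b (deltaR k P C ψ e a) :=
  hmul.apply_tmul_mul e a b

lemma deltaR_mul_of_mem_Msub (hmul : AxMul k P C ψ) {x : P} (hx : x ∈ Msub k P C ψ e) (b : P) :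
    deltaR k P C ψ e (x * b) = x • deltaR k P C ψ e b :=
  hmul.apply_tmul_mul_of_eq_tmul hx b

lemma Theta_tmul (f : C →ₗ[k] P) (x : P) (c : C) : Theta k P C f (x ⊗ₜ c) = x * f c := by
  simp [Theta]

lemma deltaR_Theta (hmul : AxMul k P C ψ) (f : C →ₗ[k] P) (t : P ⊗[k] C) :
    deltaR k P C ψ e (Theta k P C f t) =
      leftExtend (ψ ∘ₗ map LinearMap.id f)
        (TensorProduct.assoc k P C C (map (deltaR k P C ψ e) LinearMap.id t)) := by
  induction t with
  | zero => simp
  | tmul x c =>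
    rw [Theta_tmul, deltaR_mul hmul, map_tmul]
    generalize deltaR k P C ψ e x = t
    induction t with
    | zero => simp
    | tmul y d => simp [rightMul]
    | add t t' ht ht' => simp only [add_tmul, map_add, ht, ht']
  | add t t' ht ht' => simp only [map_add, ht, ht']

variable [Coalgebra k C] {ψC : C ⊗[k] C →ₗ[k] C ⊗[k] C} {Φ Φi : C →ₗ[k] P}

lemma map_id_comul_deltaR (hcomul : AxComul k P C ψ) (he : IsGrouplike k C e) (u : P) :
    map LinearMap.id (Δ k C) (deltaR k P C ψ e u) =
      TensorProduct.assoc k P C C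
        (map (deltaR k P C ψ e) LinearMap.id (deltaR k P C ψ e u)) := by
  have h := LinearMap.congr_fun hcomul (e ⊗ₜ u)
  simp only [coe_comp, Function.comp_apply, LinearEquiv.coe_coe, map_tmul, id_coe, id_eq, he.1,
    assoc_tmul] at h
  rw [deltaR_apply, h]
  generalize ψ (e ⊗ₜ u) = t
  induction t with
  | zero => simp
  | tmul x c => simp [deltaR_apply]
  | add t t' ht ht' => simp only [tmul_add, map_add, ht, ht']

lemma rid_map_counit_deltaR (hcounit : AxCounit k P C ψ) (he : IsGrouplike k C e) (u : P) :
    TensorProduct.rid k P (map LinearMap.id (ε k C) (deltaR k P C ψ e u)) = u := by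
  simpa [he.2, deltaR_apply] using LinearMap.congr_fun hcounit (e ⊗ₜ u)

lemma deltaR_apply_of_covPhi (hunit : AxPsiCUnit k C e ψC) (hcov : CovPhi k P C ψ ψC Φ) (c : C) :
    deltaR k P C ψ e (Φ c) = map Φ LinearMap.id (Δ k C c) := by
  simpa [hunit c, deltaR_apply] using LinearMap.congr_fun hcov (e ⊗ₜ c)

/-- The left `P`-linear endomorphism `x ⊗ c ↦ x f(c₍₁₎) ⊗ c₍₂₎` of `P ⊗ C`, through which
the convolution algebra `Hom(C, P)` acts on `P ⊗ C` from the right. -/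
def twist (f : C →ₗ[k] P) : P ⊗[k] C →ₗ[P] P ⊗[k] C :=
  leftExtend (map f LinearMap.id ∘ₗ Δ k C)

lemma twist_tmul (f : C →ₗ[k] P) (x : P) (c : C) :
    twist f (x ⊗ₜ c) = x • map f LinearMap.id (Δ k C c) := rfl

lemma twist_map_id (f g : C →ₗ[k] P) (t : C ⊗[k] C) :
    twist g (map f LinearMap.id t) =
      map (μ k P ∘ₗ map f g) LinearMap.id
        ((TensorProduct.assoc k C C C).symm (map LinearMap.id (Δ k C) t)) := by
  induction t with
  | zero => simp
  | tmul c d =>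
    simp only [map_tmul, twist_tmul, id_coe, id_eq]
    generalize (Δ k C) d = t
    induction t with
    | zero => simp
    | tmul b b' => simp [smul_tmul']
    | add t t' ht ht' => simp only [tmul_add, map_add, smul_add, ht, ht']
  | add t t' ht ht' => simp only [map_add, ht, ht']

lemma twist_map_comul {f g : C →ₗ[k] P}
    (hfg : μ k P ∘ₗ map f g ∘ₗ Δ k C = Algebra.linearMap k P ∘ₗ ε k C) (c : C) :
    twist g (map f LinearMap.id (Δ k C c)) = 1 ⊗ₜ c := calc
  _ = map (μ k P ∘ₗ map f g) LinearMap.id (map (Δ k C) LinearMap.id (Δ k C c)) := by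
    rw [twist_map_id]
    exact congrArg _ (Coalgebra.coassoc_symm_apply c)
  _ = map (Algebra.linearMap k P) LinearMap.id (map (ε k C) LinearMap.id (Δ k C c)) := by
    simp only [map_map, comp_assoc, hfg]
  _ = map (Algebra.linearMap k P) LinearMap.id (1 ⊗ₜ c) :=
    congrArg _ (Coalgebra.rTensor_counit_comul c)
  _ = 1 ⊗ₜ c := by simp

lemma twist_twist {f g : C →ₗ[k] P}
    (hfg : μ k P ∘ₗ map f g ∘ₗ Δ k C = Algebra.linearMap k P ∘ₗ ε k C) (t : P ⊗[k] C) :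
    twist g (twist f t) = t := by
  induction t with
  | zero => simp
  | tmul x c => rw [twist_tmul, map_smul, twist_map_comul hfg, smul_tmul', smul_eq_mul, mul_one]
  | add t t' ht ht' => simp only [map_add, ht, ht']

lemma rid_map_counit_twist (f : C →ₗ[k] P) (t : P ⊗[k] C) :
    TensorProduct.rid k P (map LinearMap.id (ε k C) (twist f t)) = Theta k P C f t := by
  induction t with
  | zero => simp
  | tmul x c =>
    have hsmul (t : C ⊗[k] C) :
        TensorProduct.rid k P (map LinearMap.id (ε k C) (x • map f LinearMap.id t)) =
          x * f (TensorProduct.rid k C (map LinearMap.id (ε k C) t)) := by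
      induction t with
      | zero => simp
      | tmul a b => simp [smul_tmul']
      | add t t' ht ht' => simp only [map_add, smul_add, mul_add, ht, ht']
    have hcounit : TensorProduct.rid k C (map LinearMap.id (ε k C) (Δ k C c)) = c := by
      have h := Coalgebra.lTensor_counit_comul (R := k) c
      exact (congrArg (TensorProduct.rid k C) h).trans (one_smul k c)
    rw [twist_tmul, hsmul, hcounit, Theta_tmul]
  | add t t' ht ht' => simp only [map_add, ht, ht']

/-- The map `u ↦ u₍₀₎ Φ⁻¹(u₍₁₎)`, with `Φ⁻¹` encoded as `Φi`. For a cleft extension it is the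
projection of `P` onto the fixed points, up to right multiplication by `Φ⁻¹(e)`. -/
def fixedProj (ψ : C ⊗[k] P →ₗ[k] P ⊗[k] C) (e : C) (Φi : C →ₗ[k] P) : P →ₗ[k] P :=
  Theta k P C Φi ∘ₗ deltaR k P C ψ e

lemma deltaR_fixedProj (hmul : AxMul k P C ψ) (hcomul : AxComul k P C ψ)
    (he : IsGrouplike k C e) (u : P) :
    deltaR k P C ψ e (fixedProj ψ e Φi u) =
      leftExtend (ψ ∘ₗ map LinearMap.id Φi ∘ₗ Δ k C) (deltaR k P C ψ e u) := by
  rw [fixedProj, comp_apply, deltaR_Theta hmul, ← map_id_comul_deltaR hcomul he]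
  generalize deltaR k P C ψ e u = t
  induction t with
  | zero => simp
  | tmul x c => simp
  | add t t' ht ht' => simp only [map_add, ht, ht']

lemma fixedProj_Phi (hunit : AxPsiCUnit k C e ψC) (hcov : CovPhi k P C ψ ψC Φ)
    (hinv : μ k P ∘ₗ map Φ Φi ∘ₗ Δ k C = Algebra.linearMap k P ∘ₗ ε k C) (c : C) :
    fixedProj ψ e Φi (Φ c) = ε k C c • (1 : P) := by
  rw [fixedProj, comp_apply, deltaR_apply_of_covPhi hunit hcov, Theta, comp_apply, map_map]
  simpa [Algebra.algebraMap_eq_smul_one] using LinearMap.congr_fun hinv c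

lemma leftExtend_twist (hmul : AxMul k P C ψ) (hone : AxOne k P C ψ) (hcomul : AxComul k P C ψ)
    (he : IsGrouplike k C e) (hunit : AxPsiCUnit k C e ψC) (hcov : CovPhi k P C ψ ψC Φ)
    (hinv : μ k P ∘ₗ map Φ Φi ∘ₗ Δ k C = Algebra.linearMap k P ∘ₗ ε k C) (t : P ⊗[k] C) :
    leftExtend (ψ ∘ₗ map LinearMap.id Φi ∘ₗ Δ k C) (twist Φ t) =
      TensorProduct.rid k P (map LinearMap.id (ε k C) t) ⊗ₜ e := by
  induction t with
  | zero => simp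
  | tmul x c =>
    rw [twist_tmul, map_smul, ← deltaR_apply_of_covPhi hunit hcov,
      ← deltaR_fixedProj hmul hcomul he, fixedProj_Phi hunit hcov hinv, map_smul, deltaR_apply,
      hone e]
    simp [smul_tmul']
  | add t t' ht ht' => simp only [map_add, add_tmul, ht, ht']

lemma fixedProj_mem_Msub (hent : IsEntwining k P C ψ) (he : IsGrouplike k C e)
    (hunit : AxPsiCUnit k C e ψC) (hconv : ConvInv k P C Φ Φi) (hcov : CovPhi k P C ψ ψC Φ)
    (u : P) : fixedProj ψ e Φi u ∈ Msub k P C ψ e := by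
  obtain ⟨hmul, hone, hcomul, -⟩ := hent
  rw [mem_Msub]
  calc
    deltaR k P C ψ e (fixedProj ψ e Φi u)
      = leftExtend (ψ ∘ₗ map LinearMap.id Φi ∘ₗ Δ k C)
          (twist Φ (twist Φi (deltaR k P C ψ e u))) := by
        rw [twist_twist hconv.2, deltaR_fixedProj hmul hcomul he]
    _ = fixedProj ψ e Φi u ⊗ₜ e := by
        rw [leftExtend_twist hmul hone hcomul he hunit hcov hconv.1, rid_map_counit_twist,
          fixedProj, comp_apply]

lemma ThetaInv_apply (u : P) : ThetaInv k P C ψ e Φi u = twist Φi (deltaR k P C ψ e u) := by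
  simp only [ThetaInv, comp_apply]
  generalize deltaR k P C ψ e u = t
  induction t with
  | zero => simp
  | tmul x c => exact mulPC_tmul x _
  | add t t' ht ht' => simp only [map_add, ht, ht']

lemma ThetaInv_eq_map_fixedProj (hcomul : AxComul k P C ψ) (he : IsGrouplike k C e) (u : P) :
    ThetaInv k P C ψ e Φi u =
      map (fixedProj ψ e Φi) LinearMap.id (deltaR k P C ψ e u) := by
  rw [ThetaInv, comp_apply, comp_apply, comp_apply, map_id_comul_deltaR hcomul he]
  generalize deltaR k P C ψ e u = t
  induction t with
  | zero => simp
  | tmul x c =>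
    simp only [map_tmul, fixedProj, comp_apply, id_apply]
    generalize deltaR k P C ψ e x = t
    induction t with
    | zero => simp
    | tmul y d => simp [mulPC_tmul, Theta_tmul, smul_tmul']
    | add t t' ht ht' => simp only [add_tmul, map_add, ht, ht']
  | add t t' ht ht' => simp only [map_add, ht, ht']

lemma ThetaInv_mem_MCsub (hent : IsEntwining k P C ψ) (he : IsGrouplike k C e)
    (hunit : AxPsiCUnit k C e ψC) (hconv : ConvInv k P C Φ Φi) (hcov : CovPhi k P C ψ ψC Φ)
    (u : P) : ThetaInv k P C ψ e Φi u ∈ MCsub k P C ψ e := by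
  let π : P →ₗ[k] Msub k P C ψ e :=
    (fixedProj ψ e Φi).codRestrict _ (fixedProj_mem_Msub hent he hunit hconv hcov)
  refine ⟨map π LinearMap.id (deltaR k P C ψ e u), ?_⟩
  rw [ThetaInv_eq_map_fixedProj hent.2.2.1 he, map_map, subtype_comp_codRestrict,
    LinearMap.id_comp]

lemma deltaR_Theta_of_mem_MCsub (hmul : AxMul k P C ψ) (hunit : AxPsiCUnit k C e ψC)
    (hcov : CovPhi k P C ψ ψC Φ) {t : P ⊗[k] C} (ht : t ∈ MCsub k P C ψ e) :
    deltaR k P C ψ e (Theta k P C Φ t) = twist Φ t := by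
  obtain ⟨t, rfl⟩ := ht
  induction t with
  | zero => simp
  | tmul x c =>
    rw [map_tmul, Theta_tmul, Submodule.subtype_apply, id_apply,
      deltaR_mul_of_mem_Msub hmul x.2, deltaR_apply_of_covPhi hunit hcov, twist_tmul]
  | add t t' ht ht' => simp only [map_add, ht, ht']

theorem invOn_ThetaInv_Theta (hent : IsEntwining k P C ψ) (he : IsGrouplike k C e)
    (hunit : AxPsiCUnit k C e ψC) (hconv : ConvInv k P C Φ Φi) (hcov : CovPhi k P C ψ ψC Φ) :
    Set.InvOn (ThetaInv k P C ψ e Φi) (Theta k P C Φ) (MCsub k P C ψ e) Set.univ := by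
  refine ⟨fun t ht => ?_, fun u _ => ?_⟩
  · rw [ThetaInv_apply, deltaR_Theta_of_mem_MCsub hent.1 hunit hcov ht, twist_twist hconv.1]
  · rw [ThetaInv_apply, ← rid_map_counit_twist, twist_twist hconv.2,
      rid_map_counit_deltaR hent.2.2.2 he]

theorem bijOn_Theta (hent : IsEntwining k P C ψ) (he : IsGrouplike k C e)
    (hunit : AxPsiCUnit k C e ψC) (hconv : ConvInv k P C Φ Φi) (hcov : CovPhi k P C ψ ψC Φ) :
    Set.BijOn (Theta k P C Φ) (MCsub k P C ψ e) Set.univ :=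
  (invOn_ThetaInv_Theta hent he hunit hconv hcov).bijOn (Set.mapsTo_univ _ _)
    fun u _ => ThetaInv_mem_MCsub hent he hunit hconv hcov u

lemma rhoPhi_tmul (ψ : C ⊗[k] P →ₗ[k] P ⊗[k] C) {b : C} (hb : IsGrouplike k C b) (u : P) :
    rhoPhi k P C ψ Φ Φi (b ⊗ₜ u) = Φ b * Theta k P C Φi (ψ (b ⊗ₜ u)) := by
  simp [rhoPhi, Theta, hb.1]

lemma sigmaPhi_tmul (ψC : C ⊗[k] C →ₗ[k] C ⊗[k] C) {b : C} (hb : IsGrouplike k C b) (c : C) :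
    sigmaPhi k P C ψC Φ Φi (b ⊗ₜ c) = Φ b * Theta k P C Φi (map Φ LinearMap.id (ψC (b ⊗ₜ c))) := by
  simp [sigmaPhi, Theta, map_map, hb.1]

end Entwine

namespace Eq2Ex

lemma zpow_mul_of_mul_eq_smul {R A : Type*} [CommSemiring R] [Semiring A] [Algebra R A]
    {u : Aˣ} {a : Rˣ} {x : A} (h : u * x = a • (x * u)) (m : ℤ) :
    ↑(u ^ m) * x = a ^ m • (x * ↑(u ^ m)) := by
  have hsmul (b : Rˣ) (y : A) : ↑(Units.map (algebraMap R A : R →* A) b) * y = b • y :=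
    (Algebra.smul_def (b : R) y).symm
  have hcomm : Commute (Units.map (algebraMap R A : R →* A) a) u :=
    Units.ext (Algebra.commutes _ _)
  have hsemi : SemiconjBy x ↑(Units.map (algebraMap R A : R →* A) a * u) (u : A) := by
    rw [SemiconjBy, h, Units.val_mul, hsmul, mul_smul_comm]
  have hpow := hsemi.units_zpow_right m
  rwa [SemiconjBy, hcomm.mul_zpow, ← map_zpow, Units.val_mul, hsmul, mul_smul_comm,
    eq_comm] at hpow

section GroupLike

variable {k : Type} [Field k]

lemma isGrouplike_cz (p : ℤ) : Entwine.IsGrouplike k (Cz k) (cz k p) := by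
  simp [Entwine.IsGrouplike, cz]

lemma Cz.hom_ext {M : Type*} [AddCommMonoid M] [Module k M] {f g : Cz k →ₗ[k] M}
    (h : ∀ p, f (cz k p) = g (cz k p)) : f = g :=
  Finsupp.basisSingleOne.ext fun p => by simpa [cz] using h p

end GroupLike

section Generators

variable (k : Type) [Field k] (q : kˣ)

lemma vE_mul_viE : vE k q * viE k q = 1 := by
  simpa [vE, viE] using RingQuot.mkAlgHom_rel k (EqRel.vvi (k := k) (q := q))

lemma viE_mul_vE : viE k q * vE k q = 1 := by
  simpa [vE, viE] using RingQuot.mkAlgHom_rel k (EqRel.viv (k := k) (q := q))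

lemma vE_mul_nE : vE k q * nE k q = q ^ 2 • (nE k q * vE k q) := by
  simpa [vE, nE, Units.smul_def] using RingQuot.mkAlgHom_rel k (EqRel.vn (k := k) (q := q))

lemma vE_mul_nbE : vE k q * nbE k q = q ^ 2 • (nbE k q * vE k q) := by
  simpa [vE, nbE, Units.smul_def] using RingQuot.mkAlgHom_rel k (EqRel.vnb (k := k) (q := q))

/-- The generator `v` as a unit of `E_q(2)`. -/
@[simps]
def vUnit : (Eq2 k q)ˣ := ⟨vE k q, viE k q, vE_mul_viE k q, viE_mul_vE k q⟩

lemma vzE_eq_zpow (m : ℤ) : vzE k q m = ↑(vUnit k q ^ m) := by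
  unfold vzE
  split_ifs with h
  · lift m to ℕ using h
    simp
  · obtain ⟨n, rfl⟩ := Int.exists_eq_neg_ofNat (le_of_not_ge h)
    simp [← inv_pow]

variable {k q}

lemma PhiE_cz (s p : ℤ) : PhiE k q s (cz k p) = ↑(vUnit k q ^ (p - s)) := by
  simp [PhiE, cz, vzE_eq_zpow]

lemma PhiiE_cz (s p : ℤ) : PhiiE k q s (cz k p) = ↑(vUnit k q ^ (s - p)) := by
  simp [PhiiE, cz, vzE_eq_zpow]

lemma convInv_PhiE (s : ℤ) : Entwine.ConvInv k (Eq2 k q) (Cz k) (PhiE k q s) (PhiiE k q s) := by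
  constructor <;>
  · refine Cz.hom_ext fun p => ?_
    obtain ⟨hcomul, hcounit⟩ := isGrouplike_cz (k := k) p
    simp [hcomul, hcounit, PhiE_cz, PhiiE_cz, ← Units.val_mul, ← zpow_add]

variable {ψ : Cz k ⊗[k] Eq2 k q →ₗ[k] Eq2 k q ⊗[k] Cz k} {ψC : Cz k ⊗[k] Cz k →ₗ[k] Cz k ⊗[k] Cz k}
  {s : ℤ}

lemma axPsiCUnit_cz (hψC : ∀ p r : ℤ, ψC (cz k p ⊗ₜ cz k r) = cz k r ⊗ₜ cz k (p + r - s)) :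
    Entwine.AxPsiCUnit k (Cz k) (cz k s) ψC := by
  suffices ψC ∘ₗ TensorProduct.mk k _ _ (cz k s) = Entwine.Δ k (Cz k) from
    LinearMap.congr_fun this
  refine Cz.hom_ext fun p => ?_
  simp [hψC, (isGrouplike_cz p).1]

lemma covPhi_PhiE
    (hψ : ∀ p m : ℤ, ψ (cz k p ⊗ₜ ↑(vUnit k q ^ m)) = ↑(vUnit k q ^ m) ⊗ₜ cz k (p + m))
    (hψC : ∀ p r : ℤ, ψC (cz k p ⊗ₜ cz k r) = cz k r ⊗ₜ cz k (p + r - s)) :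
    Entwine.CovPhi k (Eq2 k q) (Cz k) ψ ψC (PhiE k q s) := by
  refine TensorProduct.ext (Cz.hom_ext fun p => Cz.hom_ext fun r => ?_)
  simp [PhiE_cz, hψ, hψC, add_sub_assoc]

lemma sigmaPhi_cz (hψC : ∀ p r : ℤ, ψC (cz k p ⊗ₜ cz k r) = cz k r ⊗ₜ cz k (p + r - s)) (p r : ℤ) :
    Entwine.sigmaPhi k (Eq2 k q) (Cz k) ψC (PhiE k q s) (PhiiE k q s) (cz k p ⊗ₜ cz k r) = 1 := by
  rw [Entwine.sigmaPhi_tmul ψC (isGrouplike_cz p), hψC, map_tmul, Entwine.Theta_tmul]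
  simp only [id_apply, PhiE_cz, PhiiE_cz, ← Units.val_mul, ← zpow_add]
  rw [show p - s + (r - s + (s - (p + r - s))) = 0 by ring, zpow_zero, Units.val_one]

lemma rhoPhi_zpow {p m : ℤ}
    (hψ : ψ (cz k p ⊗ₜ ↑(vUnit k q ^ m)) = ↑(vUnit k q ^ m) ⊗ₜ cz k (p + m)) (s : ℤ) :
    Entwine.rhoPhi k (Eq2 k q) (Cz k) ψ (PhiE k q s) (PhiiE k q s)
      (cz k p ⊗ₜ ↑(vUnit k q ^ m)) = 1 := by
  rw [Entwine.rhoPhi_tmul ψ (isGrouplike_cz p), hψ, Entwine.Theta_tmul]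
  simp only [PhiE_cz, PhiiE_cz, ← Units.val_mul, ← zpow_add]
  rw [show p - s + (m + (s - (p + m))) = 0 by ring, zpow_zero, Units.val_one]

lemma rhoPhi_of_vE_mul_eq_smul {x : Eq2 k q} (hx : vE k q * x = q ^ 2 • (x * vE k q)) {a : k}
    {p m : ℤ} (hψ : ψ (cz k p ⊗ₜ x) = x ⊗ₜ cz k p
      + (a * ((q ^ (2 * p) : kˣ) : k)) • ((↑(vUnit k q ^ m) : Eq2 k q) ⊗ₜ cz k p)
      - (a * ((q ^ (2 * p) : kˣ) : k)) • ((↑(vUnit k q ^ m) : Eq2 k q) ⊗ₜ cz k (p + m)))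
    (s : ℤ) :
    Entwine.rhoPhi k (Eq2 k q) (Cz k) ψ (PhiE k q s) (PhiiE k q s) (cz k p ⊗ₜ x) =
      ((q ^ (2 * p) : kˣ) : k) •
        (((q ^ (-(2 * s)) : kˣ) : k) • x + a • (↑(vUnit k q ^ m) - 1)) := by
  have hconj : (↑(vUnit k q ^ (p - s)) : Eq2 k q) * (x * ↑(vUnit k q ^ (s - p))) =
      ((q ^ (2 * p) : kˣ) : k) • ((q ^ (-(2 * s)) : kˣ) : k) • x := by
    rw [← mul_assoc, zpow_mul_of_mul_eq_smul (u := vUnit k q) hx, smul_mul_assoc, mul_assoc,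
      ← Units.val_mul, ← zpow_add, show p - s + (s - p) = 0 by ring, zpow_zero, Units.val_one,
      mul_one, ← zpow_natCast, ← zpow_mul, smul_smul, ← Units.val_mul, ← zpow_add, Units.smul_def]
    congr 3
    push_cast
    ring
  rw [Entwine.rhoPhi_tmul ψ (isGrouplike_cz p), hψ]
  simp only [map_sub, map_add, map_smul, Entwine.Theta_tmul, PhiE_cz, PhiiE_cz, mul_sub, mul_add,
    mul_smul_comm, hconj, ← Units.val_mul, ← zpow_add]
  rw [show p - s + (m + (s - p)) = m by ring, show p - s + (m + (s - (p + m))) = 0 by ring,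
    zpow_zero, Units.val_one]
  module

end Generators

/-- In the `E_q(2)` example with `ψ^C(c_p ⊗ c_r) = c_r ⊗ c_{p+r-s}`,
the map `Φ(c_p) = v^{p-s}` is convolution invertible with inverse
`Φ⁻¹(c_p) = v^{-p+s}`, satisfies `Φ(c_s) = 1` and `ψ∘(id⊗Φ) = (Φ⊗id)∘ψ^C`, so
`E_q(2) ≅ X_q ×_Φ C` is a cleft extension, with trivial cocycle
`σ(c_p ⊗ c_r) = 1` and with `ρ` given by `ρ(c_p ⊗ v^{±1}) = 1`,
`ρ(c_p ⊗ n) = q^{2p}(q^{-2s}n + μ(v-1))`, `ρ(c_p ⊗ n̄) = q^{2p}(q^{-2s}n̄ + ν(v⁻¹-1))`. -/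
theorem eq2_cleft (k : Type) [Field k] (q μv νv : kˣ) (s : ℤ)
    (ψ : Cz k ⊗[k] Eq2 k q →ₗ[k] Eq2 k q ⊗[k] Cz k)
    (hgen : PsiOnGens k q μv νv ψ)
    (hent : Entwine.IsEntwining k (Eq2 k q) (Cz k) ψ)
    (ψC : Cz k ⊗[k] Cz k →ₗ[k] Cz k ⊗[k] Cz k)
    (hψC : ∀ p r : ℤ, ψC (cz k p ⊗ₜ cz k r) = cz k r ⊗ₜ cz k (p + r - s)) :
    (∀ p : ℤ, PhiE k q s (cz k p) = vzE k q (p - s)) ∧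
    PhiE k q s (cz k s) = 1 ∧
    Entwine.ConvInv k (Eq2 k q) (Cz k) (PhiE k q s) (PhiiE k q s) ∧
    Entwine.CovPhi k (Eq2 k q) (Cz k) ψ ψC (PhiE k q s) ∧
    (∀ p r : ℤ,
      Entwine.sigmaPhi k (Eq2 k q) (Cz k) ψC (PhiE k q s) (PhiiE k q s)
        (cz k p ⊗ₜ cz k r) = 1) ∧
    (∀ p : ℤ,
      Entwine.rhoPhi k (Eq2 k q) (Cz k) ψ (PhiE k q s) (PhiiE k q s)
          (cz k p ⊗ₜ vE k q) = 1 ∧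
      Entwine.rhoPhi k (Eq2 k q) (Cz k) ψ (PhiE k q s) (PhiiE k q s)
          (cz k p ⊗ₜ viE k q) = 1 ∧
      Entwine.rhoPhi k (Eq2 k q) (Cz k) ψ (PhiE k q s) (PhiiE k q s)
          (cz k p ⊗ₜ nE k q) =
        ((q ^ (2 * p) : kˣ) : k) •
          (((q ^ (-(2 * s)) : kˣ) : k) • nE k q + (μv : k) • (vE k q - 1)) ∧
      Entwine.rhoPhi k (Eq2 k q) (Cz k) ψ (PhiE k q s) (PhiiE k q s)
          (cz k p ⊗ₜ nbE k q) =
        ((q ^ (2 * p) : kˣ) : k) •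
          (((q ^ (-(2 * s)) : kˣ) : k) • nbE k q + (νv : k) • (viE k q - 1))) ∧
    Set.BijOn (Entwine.Theta k (Eq2 k q) (Cz k) (PhiE k q s))
      (Entwine.MCsub k (Eq2 k q) (Cz k) ψ (cz k s)) Set.univ := by
  obtain ⟨hv, -, hn, hnb⟩ := hgen
  have hψ : ∀ p m : ℤ, ψ (cz k p ⊗ₜ ↑(vUnit k q ^ m)) = ↑(vUnit k q ^ m) ⊗ₜ cz k (p + m) :=
    hent.1.apply_tmul_units_zpow hent.2.1 hv
  have hcov := covPhi_PhiE hψ hψC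
  refine ⟨fun p => by rw [PhiE_cz, vzE_eq_zpow], by simp [PhiE_cz], convInv_PhiE s, hcov,
    sigmaPhi_cz hψC, fun p => ⟨?_, ?_, ?_, ?_⟩,
    Entwine.bijOn_Theta hent (isGrouplike_cz s) (axPsiCUnit_cz hψC) (convInv_PhiE s) hcov⟩
  · simpa using rhoPhi_zpow (hψ p 1) s
  · simpa using rhoPhi_zpow (hψ p (-1)) s
  · simpa using rhoPhi_of_vE_mul_eq_smul (m := 1) (vE_mul_nE k q) (by simpa using hn p) s
  · simpa using rhoPhi_of_vE_mul_eq_smul (m := -1) (vE_mul_nbE k q)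
      (by simpa [sub_eq_add_neg] using hnb p) s

end Eq2Ex
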